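/- arXiv:1110.5682 — 2 statements merged into one kernel-verified Lean document; each statement's English description precedes it below -/
import Mathlib

section
/- Let μ be a Borel probability measure on ℝ^d. Then the upper Hausdorff dimension of μ equals inf{dim_H(E) : E ⊆ ℝ^d Borel, μ(E) = 1}, and the lower Hausdorff dimension of μ equals inf{dim_H(E) : E ⊆ ℝ^d Borel, μ(E) > 0}. -/
open MeasureTheory Filter Metric Set

/-- The lower local dimension of a measure at a point:
`liminf_{r→0} log μ(B(x,r)) / log r`. -/
noncomputable def lowerLocalDim {X : Type*} [MetricSpace X] [MeasurableSpace X]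
    (μ : Measure X) (x : X) : EReal :=
  Filter.liminf (fun r : ℝ =>
    ((Real.log (μ (Metric.ball x r)).toReal / Real.log r : ℝ) : EReal))
    (nhdsWithin 0 (Set.Ioi 0))

open scoped ENNReal NNReal Topology

section aux
variable {X : Type*} [MetricSpace X] [MeasurableSpace X] [BorelSpace X]

lemma aux_mass (μ : Measure X) (s : ℝ) (B : Set X) (δ : ℝ) (hδ : 0 < δ)
    (h : ∀ x ∈ B, ∀ r : ℝ, 0 < r → r < δ → μ (ball x r) ≤ ENNReal.ofReal r ^ s) :
    μ B ≤ Measure.hausdorffMeasure s B := by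
  have key : (OuterMeasure.restrict B μ.toOuterMeasure) ≤
      OuterMeasure.mkMetric (fun r : ℝ≥0∞ => r ^ s) := by
    refine OuterMeasure.le_mkMetric _ _ (ENNReal.ofReal (δ/2)) (by simpa using hδ) ?_
    intro T hT
    rw [OuterMeasure.restrict_apply]
    rcases (T ∩ B).eq_empty_or_nonempty with h0 | ⟨x, hxT, hxB⟩
    · rw [h0]; simp
    have hfin : ediam T ≠ ∞ := (hT.trans_lt ENNReal.ofReal_lt_top).ne
    obtain ⟨D, hD0, hD⟩ : ∃ D : ℝ, 0 ≤ D ∧ ediam T = ENNReal.ofReal D :=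
      ⟨(ediam T).toReal, ENNReal.toReal_nonneg, (ENNReal.ofReal_toReal hfin).symm⟩
    have hDδ : D < δ := by
      rw [hD, ENNReal.ofReal_le_ofReal_iff (by positivity)] at hT
      linarith
    have hlim : Tendsto (fun r : ℝ => ENNReal.ofReal r ^ s) (𝓝[>] D)
        (𝓝 (ENNReal.ofReal D ^ s)) :=
      ((ENNReal.continuous_rpow_const.comp ENNReal.continuous_ofReal).tendsto D).mono_left
        nhdsWithin_le_nhds
    rw [hD]
    refine ge_of_tendsto hlim ?_
    filter_upwards [Ioo_mem_nhdsGT hDδ] with r hr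
    refine le_trans (measure_mono ?_) (h x hxB r (hD0.trans_lt hr.1) hr.2)
    rintro y ⟨hyT, -⟩
    have h1 : edist y x ≤ ENNReal.ofReal D := hD ▸ edist_le_ediam_of_mem hyT hxT
    rw [edist_dist, ENNReal.ofReal_le_ofReal_iff hD0] at h1
    exact mem_ball.2 (h1.trans_lt hr.1)
  have := key B
  rw [OuterMeasure.restrict_apply, inter_self, OuterMeasure.coe_mkMetric] at this
  exact this

lemma aux_A (μ : Measure X) [IsProbabilityMeasure μ] (s : ℝ≥0) (A : Set X)
    (hA : ∀ x ∈ A, ((s : ℝ) : EReal) < lowerLocalDim μ x) (hd : dimH A < s) : μ A = 0 := by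
  have hz := hausdorffMeasure_of_dimH_lt hd
  let B : ℕ → Set X := fun n => {x ∈ A | ∀ r : ℝ, 0 < r → r < 1 / ((n : ℝ) + 1) →
    μ (ball x r) ≤ ENNReal.ofReal r ^ (s : ℝ)}
  have hB : ∀ n, μ (B n) = 0 := by
    intro n
    have h1 := aux_mass μ (s : ℝ) (B n) (1 / ((n : ℝ) + 1)) (by positivity) (fun x hx => hx.2)
    have h2 : Measure.hausdorffMeasure (s : ℝ) (B n) = 0 :=
      measure_mono_null (fun x hx => hx.1) hz
    simpa [h2] using h1
  refine measure_mono_null ?_ (measure_iUnion_null hB)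
  intro x hx
  have h1 := eventually_lt_of_lt_liminf (hA x hx)
  have h2 := h1.and (Ioo_mem_nhdsGT (zero_lt_one' ℝ))
  obtain ⟨δ, hδ, hsub⟩ := mem_nhdsGT_iff_exists_Ioo_subset.1 h2
  obtain ⟨n, hn⟩ := exists_nat_one_div_lt (show (0 : ℝ) < δ from hδ)
  refine mem_iUnion.2 ⟨n, hx, ?_⟩
  intro r hr0 hrn
  obtain ⟨h3, -, hr1⟩ := hsub ⟨hr0, hrn.trans hn⟩
  have h3' : (s : ℝ) < Real.log (μ (ball x r)).toReal / Real.log r := by exact_mod_cast h3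
  have hlog : Real.log r < 0 := Real.log_neg hr0 hr1
  rw [lt_div_iff_of_neg hlog] at h3'
  rw [ENNReal.ofReal_rpow_of_pos hr0, ← ENNReal.ofReal_toReal (measure_ne_top μ (ball x r))]
  apply ENNReal.ofReal_le_ofReal
  rcases (ENNReal.toReal_nonneg (a := μ (ball x r))).eq_or_lt with h0 | h0
  · rw [← h0]; positivity
  · rw [Real.rpow_def_of_pos hr0, ← Real.log_le_iff_le_exp h0]
    nlinarith

lemma aux_nonneg (μ : Measure X) [IsProbabilityMeasure μ] (x : X) :
    0 ≤ lowerLocalDim μ x := by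
  refine le_liminf_of_le (by isBoundedDefault) ?_
  filter_upwards [Ioo_mem_nhdsGT (zero_lt_one' ℝ)] with r hr
  have : 0 ≤ Real.log (μ (ball x r)).toReal / Real.log r := by
    apply div_nonneg_of_nonpos
    · exact Real.log_nonpos ENNReal.toReal_nonneg
        (ENNReal.toReal_le_of_le_ofReal zero_le_one (by simpa using prob_le_one))
    · exact (Real.log_neg hr.1 hr.2).le
  exact_mod_cast this

lemma aux_B [SecondCountableTopology X] (μ : Measure X) [IsProbabilityMeasure μ] (s : ℝ≥0)
    (A : Set X) (hA : ∀ x ∈ A, lowerLocalDim μ x < ((s : ℝ) : EReal))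
    (hsupp : A ⊆ μ.support) : dimH A ≤ s := by
  have hpos : ∀ x ∈ A, ∀ r : ℝ, 0 < r → 0 < μ (ball x r) := fun x hx r hr =>
    (Measure.mem_support_iff_forall x).1 (hsupp hx) _ (ball_mem_nhds x hr)
  have hr : ∀ n : ℕ, ∀ x ∈ A, ∃ r : ℝ, 0 < r ∧ r < 1 / ((n : ℝ) + 1) ∧
      ENNReal.ofReal r ^ (s : ℝ) ≤ μ (closedBall x r) := by
    intro n x hx
    have h1 : ∃ᶠ r : ℝ in 𝓝[>] 0,
      ((Real.log (μ (ball x r)).toReal / Real.log r : ℝ) : EReal) < ((s : ℝ) : EReal) :=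
      frequently_lt_of_liminf_lt (by isBoundedDefault) (hA x hx)
    have hn : (0 : ℝ) < 1 / ((n : ℝ) + 1) := by positivity
    obtain ⟨r, h3, ⟨hr0, hr1⟩, -, hrn⟩ := (h1.and_eventually
      (Eventually.and (Ioo_mem_nhdsGT (zero_lt_one' ℝ)) (Ioo_mem_nhdsGT hn))).exists
    refine ⟨r, hr0, hrn, le_trans ?_ (measure_mono ball_subset_closedBall)⟩
    have h3' : Real.log (μ (ball x r)).toReal / Real.log r < (s : ℝ) := by exact_mod_cast h3
    have hlog : Real.log r < 0 := Real.log_neg hr0 hr1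
    rw [div_lt_iff_of_neg hlog] at h3'
    rw [ENNReal.ofReal_rpow_of_pos hr0, ← ENNReal.ofReal_toReal (measure_ne_top μ (ball x r))]
    apply ENNReal.ofReal_le_ofReal
    have h0 : 0 < (μ (ball x r)).toReal :=
      ENNReal.toReal_pos (hpos x hx r hr0).ne' (measure_ne_top _ _)
    rw [Real.rpow_def_of_pos hr0, ← Real.le_log_iff_exp_le h0]
    nlinarith
  choose! r hr0 hrn hrμ using hr
  have hcov := fun n => Vitali.exists_disjoint_subfamily_covering_enlargement_closedBall A
    (fun x : X => x) (r n) (1 / ((n : ℝ) + 1)) (fun x hx => (hrn n x hx).le) 5 (by norm_num)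
  choose u huA hdisj hcov using hcov
  have hcount : ∀ n, (u n).Countable := fun n =>
    (hdisj n).countable_of_nonempty_interior (fun x hx =>
      ⟨x, ball_subset_interior_closedBall (mem_ball_self (hr0 n x (huA n hx)))⟩)
  have : ∀ n, Countable (u n) := fun n => (hcount n).to_subtype
  have hdiam : ∀ n, ∀ i : u n, ediam (closedBall (i : X) (5 * r n i)) ≤
      ENNReal.ofReal 10 * ENNReal.ofReal (r n i) := by
    intro n i
    have h0 := (hr0 n i (huA n i.2)).le
    refine ediam_le fun y hy z hz => ?_
    rw [← ENNReal.ofReal_mul (by norm_num), edist_dist]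
    apply ENNReal.ofReal_le_ofReal
    have h1 := dist_triangle_right y z (i : X)
    have h2 := mem_closedBall.1 hy
    have h3 := mem_closedBall.1 hz
    linarith
  have hbound : Measure.hausdorffMeasure (s : ℝ) A ≤ ENNReal.ofReal 10 ^ (s : ℝ) := by
    have h1 := Measure.hausdorffMeasure_le_liminf_tsum (ι := fun n : ℕ => u n) (l := atTop)
      (s : ℝ) A (fun n : ℕ => ENNReal.ofReal 10 * ENNReal.ofReal (1 / ((n : ℝ) + 1))) ?_
      (fun n i => closedBall (i : X) (5 * r n i)) ?_ ?_
    · refine h1.trans ?_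
      refine liminf_le_of_le (by isBoundedDefault) ?_
      intro b hb
      obtain ⟨n, hn⟩ := hb.exists
      refine hn.trans ?_
      calc ∑' i : u n, ediam (closedBall (i : X) (5 * r n i)) ^ (s : ℝ)
          ≤ ∑' i : u n, ENNReal.ofReal 10 ^ (s : ℝ) * μ (closedBall (i : X) (r n i)) := by
            refine ENNReal.tsum_le_tsum fun i => ?_
            refine (ENNReal.rpow_le_rpow (hdiam n i) s.2).trans ?_
            rw [ENNReal.mul_rpow_of_nonneg _ _ s.2]
            exact mul_le_mul_right (hrμ n i (huA n i.2)) _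
        _ = ENNReal.ofReal 10 ^ (s : ℝ) * ∑' i : u n, μ (closedBall (i : X) (r n i)) :=
            ENNReal.tsum_mul_left
        _ ≤ ENNReal.ofReal 10 ^ (s : ℝ) * 1 := by
            gcongr
            refine (tsum_measure_le_measure_univ
              (fun i => measurableSet_closedBall.nullMeasurableSet) ?_).trans prob_le_one
            intro i j hij
            exact (hdisj n i.2 j.2 (fun h => hij (Subtype.ext h))).aedisjoint
        _ = _ := mul_one _
    · have h2 : Tendsto (fun n : ℕ => ENNReal.ofReal (1 / ((n : ℝ) + 1))) atTop (𝓝 0) := by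
        simpa using ENNReal.tendsto_ofReal (tendsto_one_div_add_atTop_nhds_zero_nat (𝕜 := ℝ))
      simpa using ENNReal.Tendsto.const_mul h2 (Or.inr (ENNReal.ofReal_ne_top (r := 10)))
    · refine Eventually.of_forall fun n i => (hdiam n i).trans ?_
      gcongr
      exact (hrn n i (huA n i.2)).le
    · refine Eventually.of_forall fun n x hx => ?_
      obtain ⟨b, hb, hsub⟩ := hcov n x hx
      exact mem_iUnion.2 ⟨⟨b, hb⟩, hsub (mem_closedBall_self (hr0 n x hx).le)⟩
  exact dimH_le_of_hausdorffMeasure_ne_top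
    (hbound.trans_lt (ENNReal.rpow_lt_top_of_nonneg s.2 ENNReal.ofReal_ne_top)).ne

lemma aux_borel (A : Set X) (s t : ℝ≥0) (h : dimH A ≤ s) (hst : s < t) :
    ∃ E, A ⊆ E ∧ MeasurableSet E ∧ dimH E ≤ t := by
  have hz : Measure.hausdorffMeasure (t : ℝ) A = 0 :=
    hausdorffMeasure_of_dimH_lt (h.trans_lt (by exact_mod_cast hst))
  refine ⟨toMeasurable (Measure.hausdorffMeasure (t : ℝ)) A, subset_toMeasurable _ _,
    measurableSet_toMeasurable _ _, dimH_le_of_hausdorffMeasure_ne_top ?_⟩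
  rw [measure_toMeasurable, hz]; simp

lemma aux_E [SecondCountableTopology X] (μ : Measure X) [IsProbabilityMeasure μ]
    (s t : ℝ) (hst : s < t) (hne : μ {x | lowerLocalDim μ x < (s : EReal)} ≠ 0) :
    ∃ E, {x | lowerLocalDim μ x < (s : EReal)} ∩ μ.support ⊆ E ∧ MeasurableSet E ∧
      (dimH E : EReal) ≤ (t : EReal) := by
  obtain ⟨x, hx⟩ := nonempty_of_measure_ne_zero hne
  have hs : 0 ≤ s := by
    have := (aux_nonneg μ x).trans_lt hx
    exact (by exact_mod_cast this : (0 : ℝ) < s).le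
  lift s to ℝ≥0 using hs
  lift t to ℝ≥0 using s.2.trans hst.le
  obtain ⟨E, h1, h2, h3⟩ := aux_borel _ s t (aux_B μ s
    ({x | lowerLocalDim μ x < ((s : ℝ) : EReal)} ∩ μ.support) (fun x hx => hx.1)
    inter_subset_right) (by exact_mod_cast hst)
  refine ⟨E, h1, h2, ?_⟩
  exact EReal.coe_ennreal_le_coe_ennreal_iff.2 h3

lemma aux_btwn (a : ℝ≥0∞) (b : EReal) (h : (a : EReal) < b) :
    ∃ s : ℝ≥0, a < s ∧ ((s : ℝ) : EReal) < b := by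
  obtain ⟨s, h1, h2⟩ := EReal.lt_iff_exists_real_btwn.1 h
  have hs : 0 ≤ s := by
    have := (EReal.coe_ennreal_nonneg a).trans_lt h1
    exact (by exact_mod_cast this : (0 : ℝ) < s).le
  lift s to ℝ≥0 using hs
  refine ⟨s, ?_, h2⟩
  exact EReal.coe_ennreal_lt_coe_ennreal_iff.1 h1

end aux

/-- For a Borel probability measure `μ` on `ℝ^d`, the upper Hausdorff
dimension of `μ` (the `μ`-essential supremum of the lower local dimensions) equals
`inf {dim_H E : E Borel, μ E = 1}`, and the lower Hausdorff dimension of `μ`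
(the `μ`-essential infimum of the lower local dimensions) equals
`inf {dim_H E : E Borel, μ E > 0}`. -/
theorem stmt0 (d : ℕ) (hd : 0 < d) (μ : Measure (EuclideanSpace ℝ (Fin d)))
    [IsProbabilityMeasure μ] :
    (essSup (lowerLocalDim μ) μ =
      ⨅ (E : Set (EuclideanSpace ℝ (Fin d))) (_ : MeasurableSet E) (_ : μ E = 1),
        (dimH E : EReal)) ∧
    (essInf (lowerLocalDim μ) μ =
      ⨅ (E : Set (EuclideanSpace ℝ (Fin d))) (_ : MeasurableSet E) (_ : 0 < μ E),
        (dimH E : EReal)) := by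
  refine ⟨le_antisymm ?_ ?_, le_antisymm ?_ ?_⟩
  · refine le_iInf fun E => le_iInf fun hE => le_iInf fun hE1 => ?_
    by_contra! hlt
    obtain ⟨s, h1, h2⟩ := aux_btwn _ _ hlt
    have hA := aux_A μ s (E ∩ {x | ((s : ℝ) : EReal) < lowerLocalDim μ x})
      (fun x hx => hx.2) ((dimH_mono inter_subset_left).trans_lt h1)
    refine h2.not_ge (essSup_le_of_ae_le _ ?_)
    have hEae : ∀ᵐ x ∂μ, x ∈ E := (prob_compl_eq_zero_iff hE).2 hE1
    filter_upwards [hEae, measure_eq_zero_iff_ae_notMem.1 hA] with x hxE hx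
    by_contra! hlt
    exact hx ⟨hxE, hlt⟩
  · refine le_of_forall_gt fun c hc => ?_
    obtain ⟨t, ht1, htc⟩ := EReal.lt_iff_exists_real_btwn.1 hc
    obtain ⟨s, hs1, hst⟩ := EReal.lt_iff_exists_real_btwn.1 ht1
    have hae := ae_lt_of_essSup_lt hs1
    have hA : {x | lowerLocalDim μ x < (s : EReal)} ∈ ae μ := hae
    obtain ⟨E, h1, h2, h3⟩ := aux_E μ s t (by exact_mod_cast hst) (by
      rw [measure_eq_measure_of_null_sdiff (subset_univ _) (by
        rw [← compl_eq_univ_sdiff]; exact hA)]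
      simp)
    have hE : μ E = 1 :=
      (mem_ae_iff_prob_eq_one h2).1 (mem_of_superset (inter_mem hA Measure.support_mem_ae) h1)
    refine lt_of_le_of_lt ?_ htc
    exact iInf_le_of_le E (iInf_le_of_le h2 (iInf_le_of_le hE h3))
  · refine le_iInf fun E => le_iInf fun hE => le_iInf fun hE1 => ?_
    by_contra! hlt
    obtain ⟨s, h1, h2⟩ := aux_btwn _ _ hlt
    have hA := aux_A μ s (E ∩ {x | ((s : ℝ) : EReal) < lowerLocalDim μ x})
      (fun x hx => hx.2) ((dimH_mono inter_subset_left).trans_lt h1)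
    have hae := ae_lt_of_lt_essInf h2
    refine hE1.ne' (measure_eq_zero_iff_ae_notMem.2 ?_)
    filter_upwards [hae, measure_eq_zero_iff_ae_notMem.1 hA] with x hx1 hx hxE
    exact hx ⟨hxE, hx1⟩
  · refine le_of_forall_gt fun c hc => ?_
    obtain ⟨t, ht1, htc⟩ := EReal.lt_iff_exists_real_btwn.1 hc
    obtain ⟨s, hs1, hst⟩ := EReal.lt_iff_exists_real_btwn.1 ht1
    have hne : μ {x | lowerLocalDim μ x < (s : EReal)} ≠ 0 := by
      intro h0
      refine hs1.not_ge (le_essInf_of_ae_le _ ?_)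
      filter_upwards [measure_eq_zero_iff_ae_notMem.1 h0] with x hx
      exact not_lt.1 hx
    obtain ⟨E, h1, h2, h3⟩ := aux_E μ s t (by exact_mod_cast hst) hne
    have hE : 0 < μ E := by
      rw [pos_iff_ne_zero]
      intro h0
      apply hne
      rw [← measure_inter_conull (Measure.measure_compl_support (μ := μ))]
      exact measure_mono_null h1 h0
    refine lt_of_le_of_lt ?_ htc
    exact iInf_le_of_le E (iInf_le_of_le h2 (iInf_le_of_le hE h3))
end

section
/- Let E ⊆ ℝ^d be a nonempty Borel set. Then dim_H(E) = sup{ ldim_H(μ) : μ a Borel probability measure on ℝ^d with μ(E) = 1 }, where ldim_H(μ) is the lower Hausdorff dimension of μ. -/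
open MeasureTheory Filter Metric Set

/-- The lower Hausdorff dimension of a measure: the `μ`-essential infimum of the
lower local dimensions. -/
noncomputable def lowerHausdorffDim {X : Type*} [MetricSpace X] [MeasurableSpace X]
    (μ : Measure X) : EReal :=
  essInf (lowerLocalDim μ) μ

section Capacity

open scoped ENNReal Topology

/-- Square-summable real families. -/
abbrev LTwo (I : Type*) := lp (fun _ : I => ℝ) 2

/-- The potential of `g` with respect to the kernel family `ψ`. -/
noncomputable def pot {X I : Type*} (ψ : I → X → ℝ) (g : LTwo I) (x : X) : ℝ≥0∞ :=
  ∑' i, ENNReal.ofReal (g i * ψ i x)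

/-- The admissible families for a set. -/
def adm {X I : Type*} (ψ : I → X → ℝ) (A : Set X) : Set (LTwo I) :=
  {g | (∀ i, 0 ≤ g i) ∧ ∀ x ∈ A, 1 ≤ pot ψ g x}

theorem pot_mono {X I : Type*} {ψ : I → X → ℝ} (hψ : ∀ i x, 0 ≤ ψ i x) {g h : LTwo I}
    (hgh : ∀ i, g i ≤ h i) (x : X) : pot ψ g x ≤ pot ψ h x := by
  refine ENNReal.tsum_le_tsum fun i => ENNReal.ofReal_le_ofReal ?_
  exact mul_le_mul_of_nonneg_right (hgh i) (hψ i x)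

theorem pot_add {X I : Type*} {ψ : I → X → ℝ} (hψ : ∀ i x, 0 ≤ ψ i x) {g h : LTwo I}
    (hg : ∀ i, 0 ≤ g i) (hh : ∀ i, 0 ≤ h i) (x : X) :
    pot ψ (g + h) x = pot ψ g x + pot ψ h x := by
  unfold pot
  rw [← ENNReal.tsum_add]
  refine tsum_congr fun i => ?_
  rw [← ENNReal.ofReal_add (mul_nonneg (hg i) (hψ i x)) (mul_nonneg (hh i) (hψ i x)), ← add_mul]
  rfl

theorem pot_smul {X I : Type*} {ψ : I → X → ℝ} {g : LTwo I}
    {c : ℝ} (hc : 0 ≤ c) (x : X) :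
    pot ψ (c • g) x = ENNReal.ofReal c * pot ψ g x := by
  unfold pot
  rw [← ENNReal.tsum_mul_left]
  refine tsum_congr fun i => ?_
  rw [← ENNReal.ofReal_mul hc, ← mul_assoc]
  rfl

theorem adm_up {X I : Type*} {ψ : I → X → ℝ} (hψ : ∀ i x, 0 ≤ ψ i x) {A : Set X} {g h : LTwo I}
    (hg : g ∈ adm ψ A) (hgh : ∀ i, g i ≤ h i) : h ∈ adm ψ A :=
  ⟨fun i => (hg.1 i).trans (hgh i), fun x hx => (hg.2 x hx).trans (pot_mono hψ hgh x)⟩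

theorem adm_anti {X I : Type*} {ψ : I → X → ℝ} {A B : Set X} (h : A ⊆ B) :
    adm ψ B ⊆ adm ψ A := fun _ hg => ⟨hg.1, fun x hx => hg.2 x (h hx)⟩

theorem adm_mid {X I : Type*} {ψ : I → X → ℝ} (hψ : ∀ i x, 0 ≤ ψ i x) {A : Set X} {g h : LTwo I}
    (hg : g ∈ adm ψ A) (hh : h ∈ adm ψ A) : ((1/2 : ℝ) • (g + h)) ∈ adm ψ A := by
  refine ⟨fun i => ?_, fun x hx => ?_⟩
  · have h1 := hg.1 i
    have h2 := hh.1 i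
    change 0 ≤ (1/2 : ℝ) * (g i + h i)
    positivity
  · rw [pot_smul (by norm_num), pot_add hψ hg.1 hh.1]
    calc (1 : ℝ≥0∞) = ENNReal.ofReal (1/2) * (1 + 1) := by
          rw [one_add_one_eq_two, show (2 : ℝ≥0∞) = ENNReal.ofReal 2 by simp,
            ← ENNReal.ofReal_mul (by norm_num)]
          norm_num
      _ ≤ _ := by
          gcongr
          · exact hg.2 x hx
          · exact hh.2 x hx

/-- Pointwise absolute value. -/
noncomputable def absL {I : Type*} (g : LTwo I) : LTwo I :=
  ⟨fun i => |g i|, by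
    have := (lp.memℓp g)
    exact Memℓp.of_norm (by simpa [Real.norm_eq_abs] using this.norm)⟩

theorem absL_apply {I : Type*} (g : LTwo I) (i : I) : absL g i = |g i| := rfl

theorem norm_absL {I : Type*} (g : LTwo I) : ‖absL g‖ = ‖g‖ := by
  apply le_antisymm <;>
  · apply lp.norm_mono (by norm_num)
    intro i
    simp [absL_apply]

theorem exists_adm_of_summable {X I : Type*} {ψ : I → X → ℝ} (hψ : ∀ i x, 0 ≤ ψ i x)
    {A : ℕ → Set X} {g : ℕ → LTwo I} (hg : ∀ j, g j ∈ adm ψ (A j)) (hA : Monotone A)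
    (hs : Summable fun j => ‖g (j+1) - g j‖) (N : ℕ) :
    ∃ h ∈ adm ψ (⋃ j, A j), ‖h‖ ≤ ‖g N‖ + ∑' k, ‖g (k + N + 1) - g (k + N)‖ := by
  have hs' : Summable fun k => ‖absL (g (k + N + 1) - g (k + N))‖ := by
    simp only [norm_absL]
    exact (summable_nat_add_iff N).2 hs
  have hs2 := hs'.of_norm
  set T := ∑' k, absL (g (k + N + 1) - g (k + N)) with hT
  have hTi : ∀ i, HasSum (fun k => |g (k + N + 1) i - g (k+N) i|) (T i) := by
    intro i
    have := hs2.hasSum.mapL (lp.evalCLM ℝ (fun _ : I => ℝ) 2 i)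
    exact this
  have hge : ∀ i k, g (k + N) i ≤ (g N + T) i := by
    intro i k
    have h1 : g (k + N) i - g N i = ∑ m ∈ Finset.range k, (g (m + N + 1) i - g (m + N) i) := by
      have := Finset.sum_range_sub (fun m => g (m + N) i) k
      simp only [Nat.zero_add] at this
      rw [← this]
      refine Finset.sum_congr rfl fun m _ => ?_
      rw [show m + 1 + N = m + N + 1 by ring]
    have h2 : ∑ m ∈ Finset.range k, (g (m + N + 1) i - g (m + N) i) ≤ T i :=
      (Finset.sum_le_sum fun m _ => le_abs_self _).trans
        (sum_le_hasSum _ (fun _ _ => abs_nonneg _) (hTi i))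
    change _ ≤ g N i + T i
    linarith
  refine ⟨g N + T, ⟨fun i => ?_, fun x hx => ?_⟩, ?_⟩
  · exact ((hg N).1 i).trans (by simpa using hge i 0)
  · obtain ⟨j, hj⟩ := mem_iUnion.1 hx
    have hm : x ∈ A (j + N) := hA (by omega) hj
    exact ((hg (j + N)).2 x hm).trans (pot_mono hψ (fun i => hge i j) x)
  · refine (norm_add_le _ _).trans ?_
    gcongr
    refine (norm_tsum_le_tsum_norm hs').trans ?_
    simp only [norm_absL]
    exact le_rfl

theorem cap_iUnion {X I : Type*} {ψ : I → X → ℝ} (hψ : ∀ i x, 0 ≤ ψ i x)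
    {A : ℕ → Set X} (hA : Monotone A) {c c' : ℝ} (hc : c < c')
    (h : ∀ n, ∃ g ∈ adm ψ (A n), ‖g‖ ≤ c) : ∃ g ∈ adm ψ (⋃ n, A n), ‖g‖ ≤ c' := by
  let J : ℕ → ℝ := fun n => sInf (norm '' adm ψ (A n))
  have hbdd : ∀ n, BddBelow (norm '' adm ψ (A n)) := fun n =>
    ⟨0, by rintro _ ⟨g, _, rfl⟩; exact norm_nonneg _⟩
  have hne : ∀ n, (norm '' adm ψ (A n)).Nonempty := fun n => by
    obtain ⟨g, hg, _⟩ := h n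
    exact ⟨_, g, hg, rfl⟩
  have hJc : ∀ n, J n ≤ c := fun n => by
    obtain ⟨g, hg, hgc⟩ := h n
    exact (csInf_le (hbdd n) ⟨g, hg, rfl⟩).trans hgc
  have hJ0 : ∀ n, 0 ≤ J n := fun n => by
    apply le_csInf (hne n)
    rintro _ ⟨g, _, rfl⟩; exact norm_nonneg _
  have hJm : Monotone J := fun m n hmn =>
    csInf_le_csInf (hbdd m) (hne n) (image_mono (adm_anti (hA hmn)))
  have hlim := tendsto_atTop_ciSup hJm ⟨c, by rintro _ ⟨n, rfl⟩; exact hJc n⟩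
  set L := ⨆ n, J n with hL
  have hJL : ∀ n, J n ≤ L := fun n => le_ciSup ⟨c, by rintro _ ⟨n, rfl⟩; exact hJc n⟩ n
  have hLc : L ≤ c := ciSup_le hJc
  have hL0 : 0 ≤ L := (hJ0 0).trans (hJL 0)
  let δ : ℕ → ℝ := fun j => (1/16 : ℝ)^j
  have hδ : ∀ j, 0 < δ j := fun j => by positivity
  obtain ⟨φ, hφ, hφJ⟩ := Filter.extraction_forall_of_eventually (P := fun j n => L - δ j < J n)
    (fun j => hlim.eventually_const_lt (by linarith [hδ j]))
  have hex : ∀ j, ∃ g ∈ adm ψ (A (φ j)), ‖g‖ < L + δ j := by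
    intro j
    obtain ⟨_, ⟨g, hg, rfl⟩, hlt⟩ := exists_lt_of_csInf_lt (hne (φ j))
      (show J (φ j) < L + δ j by linarith [hJL (φ j), hδ j])
    exact ⟨g, hg, hlt⟩
  choose g hg hgn using hex
  have hdiff : ∀ j, ‖g (j+1) - g j‖ ≤ 4 * (L + 1) * (1/4 : ℝ)^j := by
    intro j
    have hmid := adm_mid hψ (hg j) (adm_anti (hA (hφ.monotone (Nat.le_succ j))) (hg (j+1)))
    have h1 : J (φ j) ≤ ‖(1/2 : ℝ) • (g j + g (j+1))‖ := csInf_le (hbdd _) ⟨_, hmid, rfl⟩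
    have h2 : L - δ j < ‖(1/2 : ℝ) • (g j + g (j+1))‖ := (hφJ j).trans_le h1
    rw [norm_smul] at h2
    norm_num at h2
    have hp := parallelogram_law_with_norm ℝ (g j) (g (j+1))
    have hdj : δ (j+1) ≤ δ j := by
      simp only [δ, pow_succ]
      nlinarith [hδ j]
    have hd1 : δ j ≤ 1 := pow_le_one₀ (by norm_num) (by norm_num)
    have e1 := hgn j
    have e2 := hgn (j+1)
    have n1 := norm_nonneg (g j)
    have n2 := norm_nonneg (g (j+1))
    have n3 := norm_nonneg (g j + g (j+1))
    have hδe : δ j = ((1/4 : ℝ)^j)^2 := by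
      simp only [δ]; rw [← pow_mul, mul_comm j 2, pow_mul]; norm_num
    rw [norm_sub_rev]
    apply le_of_sq_le_sq _ (by positivity)
    have e3 : ‖g j‖^2 ≤ (L + δ j)^2 := by gcongr
    have e4 : ‖g (j+1)‖^2 ≤ (L + δ j)^2 := by
      have : ‖g (j+1)‖ ≤ L + δ j := by linarith
      gcongr
    have e5 : 4 * (L^2 - 2 * L * δ j) ≤ ‖g j + g (j+1)‖^2 := by
      by_cases hh : 0 ≤ L - δ j
      · have : (2 * (L - δ j))^2 ≤ ‖g j + g (j+1)‖^2 := by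
          gcongr
          linarith
        nlinarith [sq_nonneg (δ j)]
      · have : L^2 - 2 * L * δ j ≤ 0 := by nlinarith
        nlinarith [sq_nonneg (‖g j + g (j+1)‖)]
    have e6 : ‖g j - g (j+1)‖^2 ≤ 16 * (L + 1) * δ j := by
      have := mul_le_mul_of_nonneg_left hd1 (hδ j).le
      nlinarith
    calc _ ≤ _ := e6
      _ ≤ 16 * (L+1)^2 * δ j := by
        gcongr
        nlinarith
      _ = _ := by rw [hδe]; ring
  have hs : Summable fun j => ‖g (j+1) - g j‖ :=
    Summable.of_nonneg_of_le (fun _ => norm_nonneg _) hdiff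
      ((summable_geometric_of_lt_one (by norm_num) (by norm_num)).mul_left _)
  have ht := tendsto_sum_nat_add (fun j => ‖g (j+1) - g j‖)
  have hδt : Tendsto δ atTop (𝓝 0) :=
    tendsto_pow_atTop_nhds_zero_of_lt_one (by norm_num) (by norm_num)
  have hsum := (ht.add hδt).eventually_lt_const (show (0 : ℝ) + 0 < c' - c by linarith)
  obtain ⟨N, hN⟩ := hsum.exists
  obtain ⟨f, hf, hfn⟩ := exists_adm_of_summable hψ hg (hA.comp hφ.monotone) hs N
  refine ⟨f, adm_anti (iUnion_subset fun n => ?_) hf, ?_⟩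
  · exact (hA (hφ.id_le n)).trans (subset_iUnion (fun j => A (φ j)) n)
  · have := hgn N
    linarith

end Capacity

section Compactness

open scoped ENNReal Topology

theorem exists_prefix_subset (n : ℕ → ℕ) {V : Set (ℕ → ℕ)} (hV : IsOpen V)
    (hsub : {σ : ℕ → ℕ | ∀ i, σ i ≤ n i} ⊆ V) :
    ∃ k, {σ : ℕ → ℕ | ∀ i < k, σ i ≤ n i} ⊆ V := by
  by_contra hcon
  push Not at hcon
  have h1 : ∀ k, ∃ σ : ℕ → ℕ, (∀ i < k, σ i ≤ n i) ∧ σ ∉ V := fun k => by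
    obtain ⟨σ, h, h'⟩ := not_subset.1 (hcon k)
    exact ⟨σ, h, h'⟩
  choose σ hσ hσV using h1
  have hP : IsCompact {σ : ℕ → ℕ | ∀ i, σ i ≤ n i} := by
    have := isCompact_univ_pi (X := fun _ : ℕ => ℕ) (s := fun i => Set.Iic (n i))
      (fun i => (Set.finite_Iic (n i)).isCompact)
    convert this using 1
    ext τ
    simp [Pi.le_def]
  obtain ⟨τ, hτ, φ, hφ, hlim⟩ := hP.tendsto_subseq (x := fun k i => min (σ k i) (n i))
    (fun k i => min_le_right _ _)
  have hlim2 : Tendsto (σ ∘ φ) atTop (𝓝 τ) := by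
    rw [tendsto_pi_nhds] at hlim ⊢
    intro i
    refine (hlim i).congr' ?_
    filter_upwards [eventually_gt_atTop i] with k hk
    have : i < φ k := hk.trans_le (hφ.id_le k)
    simp [hσ (φ k) i this]
  have : τ ∈ Vᶜ := hV.isClosed_compl.mem_of_tendsto hlim2
    (Eventually.of_forall fun k => hσV (φ k))
  exact this (hsub hτ)

theorem isOpen_pot {X I : Type*} [TopologicalSpace X] {ψ : I → X → ℝ}
    (hc : ∀ i, Continuous (ψ i)) (g : LTwo I) (a : ℝ≥0∞) : IsOpen {x | a < pot ψ g x} := by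
  have : LowerSemicontinuous (pot ψ g) := by
    apply lowerSemicontinuous_tsum
    intro i
    apply Continuous.lowerSemicontinuous
    exact ENNReal.continuous_ofReal.comp (continuous_const.mul (hc i))
  exact this.isOpen_preimage a

theorem exists_compact_big {X I : Type*} [TopologicalSpace X] {ψ : I → X → ℝ}
    (hψ : ∀ i x, 0 ≤ ψ i x) (hc : ∀ i, Continuous (ψ i)) {f : (ℕ → ℕ) → X} (hf : Continuous f)
    {c c' : ℝ} (hcc : c < c') (hE : ¬ ∃ g ∈ adm ψ (range f), ‖g‖ ≤ c') :
    ∃ K, IsCompact K ∧ K ⊆ range f ∧ ¬ ∃ g ∈ adm ψ K, ‖g‖ ≤ c / 2 := by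
  classical
  let Big : Set X → Prop := fun A => ∃ c' > c, ¬ ∃ g ∈ adm ψ A, ‖g‖ ≤ c'
  have hstep : ∀ (k : ℕ) (S : Set (ℕ → ℕ)), Big (f '' S) →
      ∃ m, Big (f '' (S ∩ {σ | σ k ≤ m})) := by
    rintro k S ⟨c', hc', hS⟩
    by_contra hcon
    push Not at hcon
    apply hS
    have hcon' : ∀ m, ∃ g ∈ adm ψ (f '' (S ∩ {σ | σ k ≤ m})), ‖g‖ ≤ (c + c')/2 := by
      intro m
      by_contra hm
      exact hcon m ⟨_, by linarith, hm⟩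
    have := cap_iUnion hψ (A := fun m => f '' (S ∩ {σ | σ k ≤ m})) (c' := c') (fun a b hab => by
      apply image_mono
      rintro σ ⟨h1, h2⟩
      exact ⟨h1, le_trans h2 hab⟩) (by linarith) hcon'
    have heq : (⋃ m, f '' (S ∩ {σ | σ k ≤ m})) = f '' S := by
      rw [← image_iUnion]
      congr 1
      ext σ
      rw [mem_iUnion]
      exact ⟨fun ⟨_, h, _⟩ => h, fun h => ⟨σ k, h, le_refl (σ k)⟩⟩
    rwa [heq] at this
  let m : ℕ → Set (ℕ → ℕ) → ℕ := fun k S =>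
    if h : Big (f '' S) then (hstep k S h).choose else 0
  let S : ℕ → Set (ℕ → ℕ) := fun k => Nat.rec univ (fun k S => S ∩ {σ | σ k ≤ m k S}) k
  have hSs : ∀ k, S (k+1) = S k ∩ {σ | σ k ≤ m k (S k)} := fun k => rfl
  have hBig : ∀ k, Big (f '' S k) := by
    intro k
    induction k with
    | zero => exact ⟨c', hcc, by simpa [S] using hE⟩
    | succ k ih =>
      rw [hSs]
      have : m k (S k) = (hstep k (S k) ih).choose := dif_pos ih
      rw [this]
      exact (hstep k (S k) ih).choose_spec
  let n : ℕ → ℕ := fun k => m k (S k)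
  have hS : ∀ k, S k = {σ | ∀ i < k, σ i ≤ n i} := by
    intro k
    induction k with
    | zero => simp [S]
    | succ k ih =>
      rw [hSs]
      ext σ
      constructor
      · rintro ⟨h1, h2⟩ i hi
        rw [ih] at h1
        rcases Nat.lt_succ_iff_lt_or_eq.1 hi with h | rfl
        · exact h1 i h
        · exact h2
      · intro h
        refine ⟨?_, h k (Nat.lt_succ_self k)⟩
        rw [ih]
        exact fun i hi => h i (hi.trans (Nat.lt_succ_self k))
  have hP : IsCompact {σ : ℕ → ℕ | ∀ i, σ i ≤ n i} := by
    have := isCompact_univ_pi (X := fun _ : ℕ => ℕ) (s := fun i => Set.Iic (n i))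
      (fun i => (Set.finite_Iic (n i)).isCompact)
    convert this using 1
    ext τ
    simp [Pi.le_def]
  refine ⟨f '' {σ | ∀ i, σ i ≤ n i}, hP.image hf, image_subset_range _ _, ?_⟩
  rintro ⟨g, hg, hgn⟩
  have hopen := (isOpen_pot hc ((2:ℝ) • g) 1).preimage hf
  obtain ⟨k, hk⟩ := exists_prefix_subset n hopen (by
    intro σ hσ
    have := hg.2 (f σ) ⟨σ, hσ, rfl⟩
    change 1 < pot ψ ((2:ℝ) • g) (f σ)
    rw [pot_smul (by norm_num)]
    calc (1 : ℝ≥0∞) < ENNReal.ofReal 2 * 1 := by simp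
      _ ≤ _ := by gcongr)
  obtain ⟨c', hc', hno⟩ := hBig k
  refine hno ⟨(2:ℝ) • g, ⟨fun i => ?_, ?_⟩, ?_⟩
  · have := hg.1 i
    change 0 ≤ (2:ℝ) * g i
    positivity
  · rintro _ ⟨σ, hσ, rfl⟩
    rw [hS] at hσ
    exact (hk hσ).le
  · rw [norm_smul]
    norm_num
    linarith

end Compactness

section Functional

open scoped ENNReal Topology
open CompactlySupportedContinuousMap

/-- The values whose infimum is the sublinear gauge. -/
def gaugeSet {K I : Type*} (ψ : I → K → ℝ) (f : K → ℝ) : Set ℝ :=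
  {t | ∃ (a : ℝ) (g : LTwo I), 0 ≤ a ∧ (∀ i, 0 ≤ g i) ∧
    (∀ x, ENNReal.ofReal (f x) ≤ ENNReal.ofReal a + pot ψ g x) ∧ t = a + ‖g‖}

theorem gaugeSet_nonneg {K I : Type*} {ψ : I → K → ℝ} {f : K → ℝ} {t : ℝ}
    (ht : t ∈ gaugeSet ψ f) : 0 ≤ t := by
  obtain ⟨a, g, ha, _, _, rfl⟩ := ht
  positivity

theorem gaugeSet_add {K I : Type*} {ψ : I → K → ℝ} (hψ : ∀ i x, 0 ≤ ψ i x) {f h : K → ℝ} {t u : ℝ}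
    (ht : t ∈ gaugeSet ψ f) (hu : u ∈ gaugeSet ψ h) : ∃ v ∈ gaugeSet ψ (f + h), v ≤ t + u := by
  obtain ⟨a, g, ha, hg, h1, rfl⟩ := ht
  obtain ⟨b, k, hb, hk, h2, rfl⟩ := hu
  refine ⟨_, ⟨a + b, g + k, by positivity, fun i => add_nonneg (hg i) (hk i), fun x => ?_, rfl⟩, ?_⟩
  · rw [pot_add hψ hg hk, ENNReal.ofReal_add ha hb]
    calc _ ≤ ENNReal.ofReal (f x) + ENNReal.ofReal (h x) := ENNReal.ofReal_add_le
      _ ≤ _ := add_le_add (h1 x) (h2 x)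
      _ = _ := by ring
  · linarith [norm_add_le g k]

theorem gaugeSet_smul {K I : Type*} {ψ : I → K → ℝ} {f : K → ℝ} {t c : ℝ} (hc : 0 < c)
    (ht : t ∈ gaugeSet ψ f) : c * t ∈ gaugeSet ψ (c • f) := by
  obtain ⟨a, g, ha, hg, h1, rfl⟩ := ht
  refine ⟨c * a, c • g, by positivity, fun i => mul_nonneg hc.le (hg i), fun x => ?_, ?_⟩
  · rw [pot_smul hc.le, ENNReal.ofReal_mul hc.le, ← mul_add]
    change ENNReal.ofReal (c * f x) ≤ _
    rw [ENNReal.ofReal_mul hc.le]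
    exact mul_le_mul_right (h1 x) _
  · rw [norm_smul, Real.norm_of_nonneg hc.le]
    ring

theorem exists_measure_compact {K I : Type*} [TopologicalSpace K] [CompactSpace K] [T2Space K]
    [MeasurableSpace K] [BorelSpace K] {ψ : I → K → ℝ}
    (hψ : ∀ i x, 0 ≤ ψ i x) (hc : ∀ i, Continuous (ψ i)) {c : ℝ} (hc0 : 0 < c)
    (hK : ¬ ∃ g ∈ adm ψ univ, ‖g‖ ≤ c) :
    ∃ μ : Measure K, IsFiniteMeasure μ ∧ μ univ ≠ 0 ∧
      ∀ F : Finset I, ∑ i ∈ F, (∫ x, ψ i x ∂μ) ^ 2 ≤ 1 := by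
  classical
  have hne : Nonempty K := by
    by_contra hcon
    rw [not_nonempty_iff] at hcon
    exact hK ⟨0, ⟨fun i => le_rfl, fun x => (hcon.false x).elim⟩, by simpa using hc0.le⟩
  let V := CompactlySupportedContinuousMap K ℝ
  let mkV : ∀ f : K → ℝ, Continuous f → V := fun f hf =>
    ⟨⟨f, hf⟩, HasCompactSupport.of_compactSpace f⟩
  let p : V → ℝ := fun f => sInf (gaugeSet ψ f)
  have hbdd : ∀ f : V, BddBelow (gaugeSet ψ f) := fun f => ⟨0, fun t ht => gaugeSet_nonneg ht⟩
  have hnem : ∀ f : V, (gaugeSet ψ f).Nonempty := by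
    intro f
    obtain ⟨M, hM⟩ := (isCompact_univ (X := K)).bddAbove_image (f := f) f.continuous.continuousOn
    refine ⟨_, max M 0, 0, le_max_right _ _, fun i => le_rfl, fun x => ?_, rfl⟩
    refine le_trans (ENNReal.ofReal_le_ofReal ?_) le_self_add
    exact (hM ⟨x, mem_univ x, rfl⟩).trans (le_max_left _ _)
  have hple : ∀ (f : V) {t}, t ∈ gaugeSet ψ f → p f ≤ t := fun f t ht => csInf_le (hbdd f) ht
  have hp0 : ∀ f, 0 ≤ p f := fun f => le_csInf (hnem f) fun t ht => gaugeSet_nonneg ht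
  have hpadd : ∀ f h, p (f + h) ≤ p f + p h := by
    intro f h
    apply le_of_forall_pos_le_add
    intro ε hε
    obtain ⟨t, ht, htl⟩ := exists_lt_of_csInf_lt (hnem f) (show p f < p f + ε/2 by linarith)
    obtain ⟨u, hu, hul⟩ := exists_lt_of_csInf_lt (hnem h) (show p h < p h + ε/2 by linarith)
    obtain ⟨v, hv, hvl⟩ := gaugeSet_add hψ ht hu
    have := hple (f + h) hv
    linarith
  have hpsm1 : ∀ c : ℝ, 0 < c → ∀ f, p (c • f) ≤ c * p f := by
    intro c hc f
    rw [← div_le_iff₀' hc]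
    apply le_csInf (hnem f)
    intro t ht
    rw [div_le_iff₀' hc]
    exact hple (c • f) (gaugeSet_smul hc ht)
  have hpsm : ∀ c : ℝ, 0 < c → ∀ f, p (c • f) = c * p f := by
    intro c hc f
    apply le_antisymm (hpsm1 c hc f)
    have := hpsm1 c⁻¹ (inv_pos.2 hc) (c • f)
    rw [smul_smul, inv_mul_cancel₀ hc.ne', one_smul] at this
    rw [← le_div_iff₀' hc]
    rw [div_eq_inv_mul]
    exact this
  let one : V := mkV (fun _ => 1) continuous_const
  have hone : ∀ x, one x = 1 := fun x => rfl
  have hone0 : one ≠ 0 := by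
    intro h
    obtain ⟨x⟩ := hne
    have := DFunLike.congr_fun h x
    exact one_ne_zero (α := ℝ) this
  have hp1 : 0 < p one := by
    have : min (1/2) (c/2) ≤ p one := by
      apply le_csInf (hnem one)
      rintro _ ⟨a, g, ha, hg, h1, rfl⟩
      by_contra hcon
      push Not at hcon
      have hn := norm_nonneg g
      have ha2 : a < 1/2 := by linarith [min_le_left (1/2) (c/2)]
      have hg2 : ‖g‖ < c/2 := by linarith [min_le_right (1/2) (c/2)]
      refine hK ⟨(2:ℝ) • g, ⟨fun i => mul_nonneg (by norm_num) (hg i), fun x _ => ?_⟩, ?_⟩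
      · rw [pot_smul (by norm_num)]
        have h2 := h1 x
        rw [hone] at h2
        have h3 : ENNReal.ofReal (1/2) ≤ pot ψ g x := by
          have h4 : ENNReal.ofReal (1/2) + ENNReal.ofReal (1/2)
              ≤ ENNReal.ofReal (1/2) + pot ψ g x := by
            rw [← ENNReal.ofReal_add (by norm_num) (by norm_num), add_halves]
            refine h2.trans ?_
            gcongr
          exact (ENNReal.add_le_add_iff_left ENNReal.ofReal_ne_top).1 h4
        calc (1 : ℝ≥0∞) = ENNReal.ofReal 2 * ENNReal.ofReal (1/2) := by
              rw [← ENNReal.ofReal_mul (by norm_num)]; norm_num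
          _ ≤ _ := by gcongr
      · rw [norm_smul, Real.norm_of_nonneg (by norm_num)]
        linarith
    exact lt_of_lt_of_le (by positivity) this
  obtain ⟨l, hl1, hlp⟩ := exists_extension_of_le_sublinear
    (LinearPMap.mkSpanSingleton (K := ℝ) (L := ℝ) (σ := RingHom.id ℝ) one (p one) hone0) p hpsm hpadd (by
      rintro ⟨x, hx⟩
      have hx' : x ∈ Submodule.span ℝ {one} := hx
      obtain ⟨r, rfl⟩ := Submodule.mem_span_singleton.1 hx'
      have : (LinearPMap.mkSpanSingleton (K := ℝ) (L := ℝ) (σ := RingHom.id ℝ) one (p one) hone0) ⟨r • one, hx⟩ = r * p one :=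
        LinearPMap.mkSpanSingleton'_apply _ _ _ _ _
      rw [this]
      rcases lt_or_ge 0 r with h | h
      · exact (hpsm r h one).ge
      · exact (mul_nonpos_of_nonpos_of_nonneg h hp1.le).trans (hp0 _))
  have hlone : l one = p one := by
    have := hl1 ⟨one, Submodule.mem_span_singleton_self one⟩
    rw [this]
    exact LinearPMap.mkSpanSingleton_apply ℝ ℝ hone0 (p one)
  have hlpos : ∀ f : V, 0 ≤ f → 0 ≤ l f := by
    intro f hf
    have h1 : p (-f) ≤ 0 := by
      apply hple
      refine ⟨0, 0, le_rfl, fun i => le_rfl, fun x => ?_, by simp⟩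
      have : (-f) x ≤ 0 := by
        have : 0 ≤ f x := hf x
        change -(f x) ≤ 0
        linarith
      rw [ENNReal.ofReal_of_nonpos this]
      exact zero_le
    have h2 := hlp (-f)
    rw [map_neg] at h2
    linarith
  let Λ : V →ₚ[ℝ] ℝ := PositiveLinearMap.mk₀ l hlpos
  have hΛ : ∀ f : V, ∫ x, f x ∂(RealRMK.rieszMeasure Λ) = l f := fun f =>
    RealRMK.integral_rieszMeasure Λ f
  have hfin : IsFiniteMeasure (RealRMK.rieszMeasure Λ) := inferInstance
  refine ⟨RealRMK.rieszMeasure Λ, hfin, ?_, fun F => ?_⟩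
  · intro h0
    have h1 := hΛ one
    rw [Measure.measure_univ_eq_zero.1 h0, integral_zero_measure, hlone] at h1
    exact hp1.ne h1
  · set μ := RealRMK.rieszMeasure Λ with hμ
    let b : I → ℝ := fun i => ∫ x, ψ i x ∂μ
    have hb0 : ∀ i, 0 ≤ b i := fun i => integral_nonneg (hψ i)
    let ψV : I → V := fun i => mkV (ψ i) (hc i)
    have hb : ∀ i, l (ψV i) = b i := fun i => (hΛ (ψV i)).symm
    let g : LTwo I := ∑ i ∈ F, lp.single 2 i (b i)
    have hgi : ∀ i, g i = if i ∈ F then b i else 0 := by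
      intro i
      simp only [g, lp.coeFn_sum, Finset.sum_apply, lp.single_apply, Pi.single_apply]
      simp
    have hgn : ‖g‖ ^ 2 = ∑ i ∈ F, b i ^ 2 := by
      have := lp.norm_sum_single (E := fun _ : I => ℝ) (p := 2) (by norm_num) b F
      simpa using this
    have h1 : l (∑ i ∈ F, b i • ψV i) = ∑ i ∈ F, b i ^ 2 := by
      rw [map_sum]
      refine Finset.sum_congr rfl fun i _ => ?_
      rw [map_smul, hb, smul_eq_mul, sq]
    have h2 : p (∑ i ∈ F, b i • ψV i) ≤ ‖g‖ := by
      apply hple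
      refine ⟨0, g, le_rfl, fun i => ?_, fun x => ?_, by simp⟩
      · rw [hgi]; split_ifs
        · exact hb0 i
        · exact le_rfl
      · have : (∑ i ∈ F, b i • ψV i) x = ∑ i ∈ F, b i * ψ i x := by
          rw [CompactlySupportedContinuousMap.sum_apply]
          rfl
        rw [this, ENNReal.ofReal_sum_of_nonneg (fun i _ => mul_nonneg (hb0 i) (hψ i x))]
        simp only [ENNReal.ofReal_zero, zero_add]
        calc _ = ∑ i ∈ F, ENNReal.ofReal (g i * ψ i x) := by
              refine Finset.sum_congr rfl fun i hi => ?_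
              rw [hgi, if_pos hi]
          _ ≤ _ := ENNReal.sum_le_tsum F
    have h3 : ‖g‖ ^ 2 ≤ ‖g‖ := by
      rw [hgn, ← h1]
      exact (hlp _).trans h2
    have h4 : ‖g‖ ≤ 1 := by
      by_contra hcon
      nlinarith
    change ∑ i ∈ F, b i ^ 2 ≤ 1
    rw [← hgn]
    linarith

end Functional

section Frostman

open scoped ENNReal Topology

theorem exists_frostman {X I : Type*} [MetricSpace X] [MeasurableSpace X] [BorelSpace X]
    {ψ : I → X → ℝ} (hψ : ∀ i x, 0 ≤ ψ i x) (hc : ∀ i, Continuous (ψ i))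
    {E : Set X} (hE : AnalyticSet E) {c : ℝ} (hc0 : 0 < c)
    (hno : ¬ ∃ g ∈ adm ψ E, ‖g‖ ≤ c) :
    ∃ μ : Measure X, IsProbabilityMeasure μ ∧ μ E = 1 ∧
      ∃ M : ℝ, ∀ F : Finset I, ∑ i ∈ F, (∫ x, ψ i x ∂μ) ^ 2 ≤ M := by
  rw [AnalyticSet] at hE
  rcases hE with rfl | ⟨f, hf, rfl⟩
  · exact (hno ⟨0, ⟨fun i => le_rfl, fun x hx => hx.elim⟩, by simpa using hc0.le⟩).elim
  obtain ⟨K, hKc, hKE, hK⟩ := exists_compact_big hψ hc hf (c := c/2) (by linarith) hno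
  have : CompactSpace K := isCompact_iff_compactSpace.1 hKc
  have hKm : MeasurableSet K := hKc.isClosed.measurableSet
  obtain ⟨μ, hfin, hμ0, hμ⟩ := exists_measure_compact (K := K) (ψ := fun i x => ψ i x)
    (fun i x => hψ i x) (fun i => (hc i).comp continuous_subtype_val) (c := c/2/2) (by linarith) (by
      rintro ⟨g, hg, hgn⟩
      exact hK ⟨g, ⟨hg.1, fun x hx => hg.2 ⟨x, hx⟩ (mem_univ _)⟩, hgn⟩)
  let ν : Measure X := (μ univ)⁻¹ • μ.map Subtype.val
  have hem : MeasurableEmbedding (Subtype.val : K → X) := MeasurableEmbedding.subtype_coe hKm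
  have hνK : ν K = 1 := by
    simp only [ν, Measure.smul_apply, smul_eq_mul]
    rw [hem.map_apply]
    simp only [Subtype.coe_preimage_self]
    exact ENNReal.inv_mul_cancel hμ0 (measure_ne_top _ _)
  have hνp : IsProbabilityMeasure ν := by
    constructor
    simp only [ν, Measure.smul_apply, smul_eq_mul]
    rw [hem.map_apply]
    simp only [preimage_univ]
    exact ENNReal.inv_mul_cancel hμ0 (measure_ne_top _ _)
  refine ⟨ν, hνp, le_antisymm prob_le_one (hνK ▸ measure_mono hKE), ((μ univ)⁻¹.toReal)^2, ?_⟩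
  intro F
  have hint : ∀ i, ∫ x, ψ i x ∂ν = (μ univ)⁻¹.toReal * ∫ x : K, ψ i x ∂μ := by
    intro i
    simp only [ν]
    rw [integral_smul_measure, hem.integral_map, smul_eq_mul]
  simp only [hint, mul_pow, ← Finset.mul_sum]
  exact mul_le_of_le_one_right (sq_nonneg _) (hμ F)

end Frostman

section Grid

open scoped ENNReal Topology

/-- Tent functions on the dyadic grid. -/
noncomputable def tent {d : ℕ} (i : ℕ × (Fin d → ℤ)) (x : EuclideanSpace ℝ (Fin d)) : ℝ :=
  max 0 (2 - ‖fun j => 2 ^ i.1 * x j - (i.2 j : ℝ)‖)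

/-- Weighted tent functions. -/
noncomputable def wtent {d : ℕ} (a : ℝ) (i : ℕ × (Fin d → ℤ)) (x : EuclideanSpace ℝ (Fin d)) : ℝ :=
  a⁻¹ ^ i.1 * tent i x

theorem tent_nonneg {d : ℕ} (i : ℕ × (Fin d → ℤ)) (x) : 0 ≤ tent i x := le_max_left _ _

theorem tent_le {d : ℕ} (i : ℕ × (Fin d → ℤ)) (x) : tent i x ≤ 2 :=
  max_le (by norm_num) (by linarith [norm_nonneg (fun j => 2 ^ i.1 * x j - (i.2 j : ℝ))])

theorem continuous_tent {d : ℕ} (i : ℕ × (Fin d → ℤ)) : Continuous (tent i) := by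
  unfold tent
  fun_prop

theorem abs_lt_of_tent_ne {d : ℕ} {i : ℕ × (Fin d → ℤ)} {x} (h : tent i x ≠ 0) (j : Fin d) :
    |2 ^ i.1 * x j - (i.2 j : ℝ)| < 2 := by
  have h1 : 0 < 2 - ‖fun j => 2 ^ i.1 * x j - (i.2 j : ℝ)‖ := by
    by_contra hcon
    push Not at hcon
    exact h (max_eq_left hcon)
  have h2 := norm_le_pi_norm (fun j => 2 ^ i.1 * x j - (i.2 j : ℝ)) j
  rw [Real.norm_eq_abs] at h2
  linarith

theorem one_le_tent {d : ℕ} {i : ℕ × (Fin d → ℤ)} {x : EuclideanSpace ℝ (Fin d)}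
    (h : ∀ j, |2 ^ i.1 * x j - (i.2 j : ℝ)| ≤ 1) : 1 ≤ tent i x := by
  have : ‖fun j => 2 ^ i.1 * x j - (i.2 j : ℝ)‖ ≤ 1 := by
    rw [pi_norm_le_iff_of_nonneg (by norm_num)]
    intro j
    rw [Real.norm_eq_abs]
    exact h j
  exact le_max_of_le_right (by linarith)

theorem tsum_tent_le {d : ℕ} (k : ℕ) (x : EuclideanSpace ℝ (Fin d)) (u : (Fin d → ℤ) → ℝ≥0∞)
    (B : ℝ≥0∞) (hu0 : ∀ z, tent (k, z) x = 0 → u z = 0) (huB : ∀ z, u z ≤ B) :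
    ∑' z, u z ≤ 4 ^ d * B := by
  classical
  let S : Finset (Fin d → ℤ) := Fintype.piFinset fun j =>
    Finset.Icc (⌊2 ^ k * x j⌋ - 1) (⌊2 ^ k * x j⌋ + 2)
  have hS : ∀ z ∉ S, u z = 0 := by
    intro z hz
    apply hu0
    by_contra hne
    apply hz
    rw [Fintype.mem_piFinset]
    intro j
    have h1 := abs_lt.1 (abs_lt_of_tent_ne hne j)
    have h2 := Int.floor_le (2 ^ k * x j)
    have h3 := Int.lt_floor_add_one (2 ^ k * x j)
    simp only at h1
    rw [Finset.mem_Icc]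
    constructor
    · have : ((⌊2 ^ k * x j⌋ : ℝ)) - 2 < z j := by linarith
      have : ⌊2 ^ k * x j⌋ - 2 < z j := by exact_mod_cast this
      omega
    · have : (z j : ℝ) < ⌊2 ^ k * x j⌋ + 3 := by linarith
      have : z j < ⌊2 ^ k * x j⌋ + 3 := by exact_mod_cast this
      omega
  rw [tsum_eq_sum hS]
  refine (Finset.sum_le_card_nsmul S u B fun z _ => huB z).trans ?_
  have hcard : S.card = 4 ^ d := by
    simp only [S, Fintype.card_piFinset, Int.card_Icc]
    rw [Finset.prod_congr rfl (g := fun _ => 4) (fun j _ => by omega)]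
    simp
  rw [hcard, nsmul_eq_mul]
  simp

theorem exists_big_coeff {d : ℕ} {a q : ℝ} (ha : 0 < a) (hq : 0 < q) (hq1 : q < 1)
    {A : Set (EuclideanSpace ℝ (Fin d))} {g : LTwo (ℕ × (Fin d → ℤ))}
    (hg : g ∈ adm (wtent a) A) {x} (hx : x ∈ A) :
    ∃ i, tent i x ≠ 0 ∧ (1 - q) / (4 * 4 ^ d) * (a * q) ^ i.1 ≤ g i := by
  by_contra hcon
  push Not at hcon
  set c0 := (1 - q) / (4 * 4 ^ d) with hc0
  have hc0p : 0 < c0 := by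
    have : 0 < 1 - q := by linarith
    positivity
  have h1 := hg.2 x hx
  have h2 : pot (wtent a) g x ≤ ∑' k : ℕ, 4 ^ d * ENNReal.ofReal (2 * c0 * q ^ k) := by
    unfold pot
    rw [ENNReal.tsum_prod (f := fun k z => ENNReal.ofReal (g (k, z) * wtent a (k, z) x))]
    refine ENNReal.tsum_le_tsum fun k => ?_
    apply tsum_tent_le k x
    · intro z hz
      simp [wtent, hz]
    · intro z
      apply ENNReal.ofReal_le_ofReal
      by_cases hz : tent (k, z) x = 0
      · simp only [wtent, hz, mul_zero]
        positivity
      · have h3 := (hcon (k, z) hz).le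
        have h4 := tent_le (k, z) x
        have h5 := tent_nonneg (k, z) x
        calc g (k, z) * wtent a (k, z) x ≤ (c0 * (a * q) ^ k) * (a⁻¹ ^ k * 2) := by
              unfold wtent
              gcongr
          _ = 2 * c0 * q ^ k * (a * a⁻¹) ^ k := by rw [mul_pow, mul_pow]; ring
          _ = _ := by rw [mul_inv_cancel₀ ha.ne']; simp
  have h3 : ∑' k : ℕ, (4:ℝ≥0∞) ^ d * ENNReal.ofReal (2 * c0 * q ^ k) = ENNReal.ofReal (1/2) := by
    rw [ENNReal.tsum_mul_left, ← ENNReal.ofReal_tsum_of_nonneg (fun k => by positivity)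
      ((summable_geometric_of_lt_one hq.le hq1).mul_left _), tsum_mul_left,
      tsum_geometric_of_lt_one hq.le hq1]
    rw [show (4 : ℝ≥0∞) ^ d = ENNReal.ofReal (4 ^ d) by
      rw [ENNReal.ofReal_pow (by norm_num)]; simp, ← ENNReal.ofReal_mul (by positivity)]
    congr 1
    rw [hc0]
    have : 1 - q ≠ 0 := by linarith
    field_simp
    norm_num
  have h4 : (1 : ℝ≥0∞) ≤ ENNReal.ofReal (1/2) := h1.trans (h2.trans h3.le)
  rw [← ENNReal.ofReal_one, ENNReal.ofReal_le_ofReal_iff (by norm_num)] at h4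
  norm_num at h4

theorem ediam_tent_le {d : ℕ} (i : ℕ × (Fin d → ℤ)) :
    ediam {x | tent i x ≠ 0} ≤ ENNReal.ofReal (4 * d * (1/2) ^ i.1) := by
  apply ediam_le
  intro x hx y hy
  rw [edist_dist]
  apply ENNReal.ofReal_le_ofReal
  rw [EuclideanSpace.dist_eq]
  apply Real.sqrt_le_iff.2
  refine ⟨by positivity, ?_⟩
  have h1 : ∀ j, dist (x j) (y j) ^ 2 ≤ (4 * (1/2) ^ i.1) ^ 2 := by
    intro j
    have e1 := abs_lt.1 (abs_lt_of_tent_ne hx j)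
    have e2 := abs_lt.1 (abs_lt_of_tent_ne hy j)
    have e3 : |2 ^ i.1 * (x j - y j)| ≤ 4 := by
      rw [abs_le]; constructor <;> linarith
    rw [abs_mul, abs_of_pos (by positivity)] at e3
    have e4 : dist (x j) (y j) ≤ 4 * (1/2) ^ i.1 := by
      rw [Real.dist_eq, one_div, inv_pow, ← div_eq_mul_inv, le_div_iff₀' (by positivity)]
      exact e3
    gcongr
  refine (Finset.sum_le_card_nsmul _ _ _ fun j _ => h1 j).trans ?_
  rw [Finset.card_univ, Fintype.card_fin, nsmul_eq_mul]
  have hd : (d : ℝ) ≤ (d:ℝ)^2 := by exact_mod_cast Nat.le_self_pow (by norm_num) d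
  calc (d:ℝ) * (4 * (1/2) ^ i.1) ^ 2 ≤ (d:ℝ)^2 * (4 * (1/2) ^ i.1) ^ 2 := by gcongr
    _ = _ := by ring

theorem hausdorff_zero {d : ℕ} {a q t : ℝ} (ha : 0 < a) (hq : 0 < q) (hq1 : q < 1) (ht : 0 < t)
    (haq : (a * q) ^ 2 = (1/2 : ℝ) ^ t)
    {A : Set (EuclideanSpace ℝ (Fin d))}
    (h : ∀ c > 0, ∃ g ∈ adm (wtent a) A, ‖g‖ ≤ c) : μH[t] A = 0 := by
  classical
  have h' : ∀ n : ℕ, ∃ g ∈ adm (wtent a) A, ‖g‖ ≤ 1 / ((n:ℝ) + 1) := fun n => h _ (by positivity)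
  choose g hg hgn using h'
  set c0 := (1 - q) / (4 * 4 ^ d) with hc0
  have hc0p : 0 < c0 := by
    have : 0 < 1 - q := by linarith
    positivity
  let T : ℕ → (ℕ × (Fin d → ℤ)) → Set (EuclideanSpace ℝ (Fin d)) := fun n i =>
    if c0 * (a * q) ^ i.1 ≤ g n i then {x | tent i x ≠ 0} else ∅
  set C : ℝ := (4 * d) ^ t / c0 ^ 2 with hC
  have hC0 : 0 ≤ C := by positivity
  have hdiam : ∀ n i, ediam (T n i) ^ t ≤ ENNReal.ofReal (C * (g n i) ^ 2) := by
    intro n i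
    simp only [T]
    split_ifs with hi
    · calc ediam {x | tent i x ≠ 0} ^ t ≤ ENNReal.ofReal (4 * d * (1/2) ^ i.1) ^ t := by
            gcongr
            exact ediam_tent_le i
        _ = ENNReal.ofReal ((4 * d * (1/2) ^ i.1) ^ t) :=
            ENNReal.ofReal_rpow_of_nonneg (by positivity) ht.le
        _ ≤ _ := by
            apply ENNReal.ofReal_le_ofReal
            rw [Real.mul_rpow (by positivity) (by positivity), ← Real.rpow_natCast (1/2) i.1,
              ← Real.rpow_mul (by norm_num), mul_comm (i.1 : ℝ) t, Real.rpow_mul (by norm_num),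
              ← haq, Real.rpow_natCast, hC, div_mul_eq_mul_div, mul_div_assoc]
            gcongr
            rw [le_div_iff₀ (by positivity)]
            calc ((a * q) ^ 2) ^ i.1 * c0 ^ 2 = (c0 * (a * q) ^ i.1) ^ 2 := by ring
              _ ≤ _ := by gcongr
    · rw [ediam_empty, ENNReal.zero_rpow_of_pos ht]
      exact zero_le
  have hsq : ∀ n, ∑' i, ENNReal.ofReal (C * (g n i) ^ 2) ≤
      ENNReal.ofReal (C * (1 / ((n:ℝ) + 1)) ^ 2) := by
    intro n
    have hs := lp.hasSum_norm (p := 2) (by norm_num) (g n)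
    simp only [ENNReal.toReal_ofNat, Real.rpow_ofNat, Real.norm_eq_abs, sq_abs] at hs
    have hs2 := hs.mul_left C
    rw [← ENNReal.ofReal_tsum_of_nonneg (fun i => by positivity) hs2.summable, hs2.tsum_eq]
    apply ENNReal.ofReal_le_ofReal
    have := hgn n
    gcongr
  have hlim : Tendsto (fun n : ℕ => ENNReal.ofReal (C * (1 / ((n:ℝ) + 1)) ^ 2)) atTop (𝓝 0) := by
    have h1 : Tendsto (fun n : ℕ => C * (1 / ((n:ℝ) + 1)) ^ 2) atTop (𝓝 0) := by
      have := (tendsto_one_div_add_atTop_nhds_zero_nat (𝕜 := ℝ)).pow 2 |>.const_mul C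
      simpa using this
    simpa using ENNReal.tendsto_ofReal h1
  have hle := Measure.hausdorffMeasure_le_liminf_tsum (ι := fun _ : ℕ => ℕ × (Fin d → ℤ)) t A
    (l := atTop) (fun n => ENNReal.ofReal (C * (1 / ((n:ℝ) + 1)) ^ 2) ^ t⁻¹) (by
      have := hlim.ennrpow_const t⁻¹
      rwa [ENNReal.zero_rpow_of_pos (inv_pos.2 ht)] at this) T
    (Eventually.of_forall fun n i => by
      rw [ENNReal.le_rpow_inv_iff ht]
      exact (hdiam n i).trans ((ENNReal.le_tsum i).trans (hsq n)))
    (Eventually.of_forall fun n x hx => by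
      obtain ⟨i, hi, hgi⟩ := exists_big_coeff ha hq hq1 (hg n) hx
      refine mem_iUnion.2 ⟨i, ?_⟩
      simp only [T]
      rw [if_pos hgi]
      exact hi)
  have hto : Tendsto (fun n => ∑' i, ediam (T n i) ^ t) atTop (𝓝 0) :=
    tendsto_of_tendsto_of_tendsto_of_le_of_le tendsto_const_nhds hlim (fun _ => zero_le)
      (fun n => (ENNReal.tsum_le_tsum (hdiam n)).trans (hsq n))
  rw [hto.liminf_eq] at hle
  exact le_antisymm hle zero_le

end Grid

section Local

open scoped ENNReal Topology

set_option maxHeartbeats 1000000 in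
theorem ae_ball_bound {d : ℕ} {a : ℝ} (ha : 0 < a) (μ : Measure (EuclideanSpace ℝ (Fin d)))
    [IsProbabilityMeasure μ] {M : ℝ}
    (hM : ∀ F : Finset (ℕ × (Fin d → ℤ)), ∑ i ∈ F, (∫ x, wtent a i x ∂μ) ^ 2 ≤ M) :
    ∀ᵐ x ∂μ, ∃ C : ℝ, 0 < C ∧
      ∀ k : ℕ, (μ (ball x ((1/2) ^ k * (1/2)))).toReal ≤ C * (a ^ 2) ^ k := by
  have hwc : ∀ i : ℕ × (Fin d → ℤ), Continuous (wtent a i) := fun i =>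
    continuous_const.mul (continuous_tent i)
  have hw0 : ∀ (i : ℕ × (Fin d → ℤ)) x, 0 ≤ wtent a i x := fun i x =>
    mul_nonneg (by positivity) (tent_nonneg i x)
  have hwi : ∀ i : ℕ × (Fin d → ℤ), Integrable (wtent a i) μ := by
    intro i
    refine Integrable.of_bound (hwc i).aestronglyMeasurable (a⁻¹ ^ i.1 * 2)
      (Eventually.of_forall fun x => ?_)
    rw [Real.norm_of_nonneg (hw0 i x)]
    exact mul_le_mul_of_nonneg_left (tent_le i x) (by positivity)
  let b : ℕ × (Fin d → ℤ) → ℝ := fun i => ∫ x, wtent a i x ∂μ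
  have hb0 : ∀ i, 0 ≤ b i := fun i => integral_nonneg (hw0 i)
  have hmeas : ∀ i : ℕ × (Fin d → ℤ), Measurable fun x => ENNReal.ofReal (b i * wtent a i x) :=
    fun i => ENNReal.measurable_ofReal.comp ((hwc i).measurable.const_mul _)
  have hlin : ∫⁻ x, ∑' i, ENNReal.ofReal (b i * wtent a i x) ∂μ ≤ ENNReal.ofReal M := by
    rw [lintegral_tsum fun i => (hmeas i).aemeasurable]
    have h1 : ∀ i, ∫⁻ x, ENNReal.ofReal (b i * wtent a i x) ∂μ = ENNReal.ofReal (b i ^ 2) := by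
      intro i
      rw [← ofReal_integral_eq_lintegral_ofReal ((hwi i).const_mul _)
        (Eventually.of_forall fun x => mul_nonneg (hb0 i) (hw0 i x)), integral_const_mul, sq]
    simp only [h1]
    rw [ENNReal.tsum_eq_iSup_sum]
    refine iSup_le fun F => ?_
    rw [← ENNReal.ofReal_sum_of_nonneg fun i _ => sq_nonneg _]
    exact ENNReal.ofReal_le_ofReal (hM F)
  have hae := ae_lt_top (Measurable.tsum hmeas) (hlin.trans_lt ENNReal.ofReal_lt_top).ne
  filter_upwards [hae] with x hx
  set S := ∑' i, ENNReal.ofReal (b i * wtent a i x) with hS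
  refine ⟨S.toReal + 1, by positivity, fun k => ?_⟩
  let z : Fin d → ℤ := fun j => round (2 ^ k * x j)
  have hz : ∀ j, |2 ^ k * x j - (z j : ℝ)| ≤ 1/2 := fun j => abs_sub_round _
  have h1 : a⁻¹ ^ k ≤ wtent a (k, z) x := by
    have : 1 ≤ tent (k, z) x := one_le_tent fun j => (hz j).trans (by norm_num)
    exact le_mul_of_one_le_right (by positivity) this
  generalize hR : (1/2 : ℝ) ^ k * (1/2) = R
  have h2 : a⁻¹ ^ k * (μ (ball x R)).toReal ≤ b (k, z) := by
    have h3 : ∀ y ∈ ball x R, a⁻¹ ^ k ≤ wtent a (k, z) y := by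
      intro y hy
      have : 1 ≤ tent (k, z) y := one_le_tent fun j => by
        have e1 : dist (y j) (x j) ≤ dist y x := by
          rw [EuclideanSpace.dist_eq]
          apply Real.le_sqrt_of_sq_le
          exact Finset.single_le_sum (f := fun j => dist (y j) (x j) ^ 2)
            (fun _ _ => sq_nonneg _) (Finset.mem_univ j)
        have e2 : |y j - x j| ≤ (1/2) ^ k * (1/2) := by
          rw [← Real.dist_eq]
          rw [hR]
          exact e1.trans (mem_ball.1 hy).le
        have e3 : |2 ^ k * (y j - x j)| ≤ 1/2 := by
          rw [abs_mul, abs_of_pos (by positivity)]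
          calc (2:ℝ) ^ k * |y j - x j| ≤ 2 ^ k * ((1/2) ^ k * (1/2)) := by gcongr
            _ = (2 * (1/2)) ^ k * (1/2) := by rw [mul_pow]; ring
            _ = 1/2 := by norm_num
        have e4 := abs_le.1 e3
        have e5 := abs_le.1 (hz j)
        simp only
        rw [abs_le]
        constructor <;> linarith
      exact le_mul_of_one_le_right (by positivity) this
    calc a⁻¹ ^ k * (μ (ball x R)).toReal
        = ∫ y in ball x R, a⁻¹ ^ k ∂μ := by
          rw [setIntegral_const, smul_eq_mul, mul_comm]
          rfl
      _ ≤ ∫ y in ball x R, wtent a (k, z) y ∂μ :=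
          setIntegral_mono_on (integrable_const _).integrableOn (hwi _).integrableOn
            measurableSet_ball h3
      _ ≤ b (k, z) := setIntegral_le_integral (hwi _) (Eventually.of_forall (hw0 _))
  have h4 : b (k, z) * wtent a (k, z) x ≤ S.toReal := by
    have := ENNReal.le_tsum (f := fun i => ENNReal.ofReal (b i * wtent a i x)) (k, z)
    rw [← ENNReal.ofReal_le_iff_le_toReal hx.ne]
    exact this
  have h5 : a⁻¹ ^ k * (μ (ball x R)).toReal * a⁻¹ ^ k ≤ S.toReal + 1 := by
    exact (mul_le_mul h2 h1 (by positivity) (hb0 (k, z))).trans (h4.trans (by linarith))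
  generalize (μ (ball x R)).toReal = m at h5
  calc m
      = (a * a⁻¹) ^ k * (a * a⁻¹) ^ k * m := by
        rw [mul_inv_cancel₀ ha.ne']; simp
    _ = (a⁻¹ ^ k * m * a⁻¹ ^ k) * (a ^ 2) ^ k := by
        rw [mul_pow]; ring
    _ ≤ _ := by gcongr

theorem le_lowerLocalDim {X : Type*} [MetricSpace X] [MeasurableSpace X]
    {μ : Measure X} [IsProbabilityMeasure μ] {x : X} (hx : x ∈ μ.support) {s s' C : ℝ} (hs0 : 0 < s)
    (hs : s' < s) (hC : 0 < C)
    (h : ∀ k : ℕ, (μ (ball x ((1/2) ^ k * (1/2)))).toReal ≤ C * ((1/2 : ℝ) ^ s) ^ k) :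
    (s' : EReal) ≤ lowerLocalDim μ x := by
  have hpos : ∀ r > 0, 0 < (μ (ball x r)).toReal := by
    intro r hr
    have := (Measure.mem_support_iff_forall x).1 hx _ (ball_mem_nhds x hr)
    exact ENNReal.toReal_pos this.ne' (measure_ne_top _ _)
  have hlim : Tendsto (fun r : ℝ => C * 4 ^ s * r ^ (s - s')) (𝓝[>] 0) (𝓝 0) := by
    have h1 : Tendsto (fun r : ℝ => r ^ (s - s')) (𝓝[>] 0) (𝓝 0) := by
      have := (Real.continuousAt_rpow_const 0 (s - s') (Or.inr (by linarith))).tendsto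
      rw [Real.zero_rpow (by linarith)] at this
      exact this.mono_left nhdsWithin_le_nhds
    simpa using h1.const_mul (C * 4 ^ s)
  apply le_liminf_of_le (by isBoundedDefault)
  have hev1 := hlim.eventually_lt_const (show (0:ℝ) < 1 by norm_num)
  have hev2 : ∀ᶠ r : ℝ in 𝓝[>] 0, r ∈ Ioo (0:ℝ) (1/2) := Ioo_mem_nhdsGT (by norm_num)
  filter_upwards [hev1, hev2] with r hr1 hr2
  obtain ⟨hr0, hr2⟩ := hr2
  rw [EReal.coe_le_coe_iff]
  have hlog : Real.log r < 0 := Real.log_neg hr0 (by linarith)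
  rw [le_div_iff_of_neg hlog]
  obtain ⟨k, hk1, hk2⟩ := exists_nat_pow_near_of_lt_one (x := 2 * r) (y := (1/2 : ℝ)) (by linarith)
    (by linarith) (by norm_num) (by norm_num)
  have hμ : (μ (ball x r)).toReal ≤ r ^ s' := by
    calc (μ (ball x r)).toReal ≤ (μ (ball x ((1/2) ^ k * (1/2)))).toReal := by
          apply ENNReal.toReal_mono (measure_ne_top _ _)
          apply measure_mono (ball_subset_ball _)
          linarith
      _ ≤ C * ((1/2 : ℝ) ^ s) ^ k := h k
      _ = C * ((1/2 : ℝ) ^ k) ^ s := by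
          rw [← Real.rpow_natCast, ← Real.rpow_natCast, ← Real.rpow_mul (by norm_num),
            ← Real.rpow_mul (by norm_num), mul_comm s]
      _ ≤ C * (4 * r) ^ s := by
          gcongr
          rw [pow_succ] at hk1
          linarith
      _ = (C * 4 ^ s * r ^ (s - s')) * r ^ s' := by
          rw [Real.mul_rpow (by norm_num) hr0.le, mul_assoc _ (r ^ (s - s')),
            ← Real.rpow_add hr0]
          ring_nf
      _ ≤ 1 * r ^ s' := by gcongr
      _ = _ := one_mul _
  calc Real.log (μ (ball x r)).toReal ≤ Real.log (r ^ s') := Real.log_le_log (hpos r hr0) hμ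
    _ = _ := Real.log_rpow hr0 _

theorem exists_large_dim {d : ℕ} {E : Set (EuclideanSpace ℝ (Fin d))} (hE : MeasurableSet E)
    {s' s : ℝ} (hs0 : 0 < s) (hs : s' < s) {t : NNReal} (hst : s < t) (ht : (t : ℝ≥0∞) < dimH E) :
    ∃ μ : Measure (EuclideanSpace ℝ (Fin d)), IsProbabilityMeasure μ ∧ μ E = 1 ∧
      (s' : EReal) ≤ lowerHausdorffDim μ := by
  let a : ℝ := (1/2 : ℝ) ^ (s/2)
  let q : ℝ := (1/2 : ℝ) ^ (((t:ℝ) - s)/2)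
  have ha : 0 < a := by positivity
  have hq : 0 < q := by positivity
  have hq1 : q < 1 := Real.rpow_lt_one (by norm_num) (by norm_num) (by linarith)
  have haq : (a * q) ^ 2 = (1/2 : ℝ) ^ (t:ℝ) := by
    simp only [a, q]
    rw [← Real.rpow_add (by norm_num), ← Real.rpow_natCast, ← Real.rpow_mul (by norm_num)]
    congr 1
    push_cast
    ring
  have ha2 : a ^ 2 = (1/2 : ℝ) ^ s := by
    simp only [a]
    rw [← Real.rpow_natCast, ← Real.rpow_mul (by norm_num)]
    congr 1
    push_cast
    ring
  have hinf := hausdorffMeasure_of_lt_dimH ht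
  have hex : ∃ c > 0, ¬ ∃ g ∈ adm (wtent a) E, ‖g‖ ≤ c := by
    by_contra hcon
    push Not at hcon
    have := hausdorff_zero ha hq hq1 (by linarith : (0:ℝ) < t) haq (A := E) hcon
    rw [this] at hinf
    exact ENNReal.zero_ne_top hinf
  obtain ⟨c, hc0, hc⟩ := hex
  obtain ⟨μ, hμ, hμE, M, hM⟩ := exists_frostman (ψ := wtent a)
    (fun i x => mul_nonneg (by positivity) (tent_nonneg i x))
    (fun i => continuous_const.mul (continuous_tent i)) hE.analyticSet hc0 hc
  refine ⟨μ, hμ, hμE, ?_⟩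
  refine le_essInf_of_ae_le _ ?_
  filter_upwards [ae_ball_bound ha μ hM, Measure.support_mem_ae] with x ⟨C, hC, hCb⟩ hx
  rw [ha2] at hCb
  exact le_lowerLocalDim hx hs0 hs hC hCb

theorem dirac_dim {X : Type*} [MetricSpace X] [MeasurableSpace X] (μ : Measure X)
    [IsProbabilityMeasure μ] : 0 ≤ lowerHausdorffDim μ := by
  refine le_essInf_of_ae_le _ ?_
  refine Eventually.of_forall fun x => ?_
  apply le_liminf_of_le (by isBoundedDefault)
  have hev2 : ∀ᶠ r : ℝ in 𝓝[>] 0, r ∈ Ioo (0:ℝ) (1/2) := Ioo_mem_nhdsGT (by norm_num)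
  filter_upwards [hev2] with r hr
  have h1 : Real.log r ≤ 0 := Real.log_nonpos hr.1.le (by linarith [hr.2])
  have h2 : Real.log (μ (ball x r)).toReal ≤ 0 :=
    Real.log_nonpos ENNReal.toReal_nonneg (ENNReal.toReal_le_of_le_ofReal (by norm_num)
      (by simpa using prob_le_one))
  exact_mod_cast div_nonneg_of_nonpos h2 h1

theorem measure_null_of_decay {X : Type*} [MetricSpace X] [MeasurableSpace X] [BorelSpace X]
    (μ : Measure X) {s δ : ℝ} (hs : 0 < s) (hδ : 0 < δ) {A : Set X} (hA : μH[s] A = 0)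
    (h : ∀ x ∈ A, ∀ r : ℝ, 0 < r → r < δ → μ (ball x r) ≤ ENNReal.ofReal (r ^ s)) : μ A = 0 := by
  let c : ℝ≥0∞ := ENNReal.ofReal (2 ^ s)
  have hc0 : c ≠ 0 := by simp only [c]; rw [ne_eq, ENNReal.ofReal_eq_zero]; push Not; positivity
  have hct : c ≠ ⊤ := ENNReal.ofReal_ne_top
  have key : c⁻¹ • μ.restrict A ≤ μH[s] := by
    apply Measure.le_hausdorffMeasure s _ (ENNReal.ofReal (δ/3)) (by simpa using hδ)
    intro U hU
    rw [Measure.smul_apply, smul_eq_mul, ENNReal.inv_mul_le_iff hc0 hct]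
    refine (measure_mono subset_closure).trans ?_
    rw [Measure.restrict_apply isClosed_closure.measurableSet]
    rcases (closure U ∩ A).eq_empty_or_nonempty with he | ⟨x, hxU, hxA⟩
    · rw [he]; simp
    have hdt : ediam (closure U) ≠ ⊤ := by
      rw [ediam_closure]; exact (hU.trans_lt ENNReal.ofReal_lt_top).ne
    set D := (ediam (closure U)).toReal with hD
    have hD0 : 0 ≤ D := ENNReal.toReal_nonneg
    have hDe : ediam U = ENNReal.ofReal D := by
      rw [hD, ENNReal.ofReal_toReal hdt, ediam_closure]
    have hDδ : D ≤ δ/3 := by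
      rw [hDe] at hU
      exact (ENNReal.ofReal_le_ofReal_iff (by positivity)).1 hU
    have hsub : ∀ r > D, closure U ∩ A ⊆ ball x r := by
      rintro r hr y ⟨hy, _⟩
      rw [mem_ball, dist_edist]
      exact (ENNReal.toReal_mono hdt (edist_le_ediam_of_mem hy hxU)).trans_lt hr
    rw [hDe, ENNReal.ofReal_rpow_of_nonneg hD0 hs.le, ← ENNReal.ofReal_mul (by positivity),
      ← Real.mul_rpow (by norm_num) hD0]
    rcases hD0.eq_or_lt with h0 | h0
    · rw [← h0, mul_zero, Real.zero_rpow hs.ne', ENNReal.ofReal_zero]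
      have hlim : Tendsto (fun r : ℝ => ENNReal.ofReal (r ^ s)) (𝓝[>] 0) (𝓝 0) := by
        have := (Real.continuousAt_rpow_const 0 s (Or.inr hs.le)).tendsto
        rw [Real.zero_rpow hs.ne'] at this
        simpa using ENNReal.tendsto_ofReal (this.mono_left (nhdsWithin_le_nhds (s := Ioi 0)))
      refine ge_of_tendsto hlim ?_
      have hev2 : ∀ᶠ r : ℝ in 𝓝[>] 0, r ∈ Ioo (0:ℝ) δ := Ioo_mem_nhdsGT hδ
      filter_upwards [hev2] with r hr
      exact (measure_mono (hsub r (h0 ▸ hr.1))).trans (h x hxA r hr.1 hr.2)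
    · exact (measure_mono (hsub (2 * D) (by linarith))).trans
        (h x hxA (2 * D) (by linarith) (by linarith))
  have h1 := key A
  rw [hA, Measure.smul_apply, smul_eq_mul, Measure.restrict_apply_self] at h1
  have h2 := le_antisymm h1 zero_le
  rcases mul_eq_zero.1 h2 with h3 | h3
  · exact (hct (ENNReal.inv_eq_zero.1 h3)).elim
  · exact h3

theorem lowerHausdorffDim_le {X : Type*} [MetricSpace X] [MeasurableSpace X] [BorelSpace X]
    (μ : Measure X) [IsProbabilityMeasure μ] {E : Set X} (hE : μ E = 1) :
    lowerHausdorffDim μ ≤ (dimH E : EReal) := by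
  by_contra hcon
  push Not at hcon
  obtain ⟨s, hs1, hs2⟩ := EReal.lt_iff_exists_real_btwn.1 hcon
  have hs0 : 0 < s := by
    have : (0 : EReal) < s := lt_of_le_of_lt (EReal.coe_ennreal_nonneg _) hs1
    exact_mod_cast this
  lift s to NNReal using hs0.le
  have hdim : dimH E < (s : ℝ≥0∞) := by
    rw [← EReal.coe_ennreal_lt_coe_ennreal_iff]
    exact hs1
  have hH : μH[(s:ℝ)] E = 0 := hausdorffMeasure_of_dimH_lt hdim
  have hae := ae_lt_of_lt_essInf hs2
  let A : ℕ → Set X := fun n => {x | x ∈ E ∧ ∀ r : ℝ, 0 < r → r < 1 / ((n:ℝ) + 1) →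
    μ (ball x r) ≤ ENNReal.ofReal (r ^ (s:ℝ))}
  have hA : ∀ n, μ (A n) = 0 := fun n =>
    measure_null_of_decay μ hs0 (by positivity) (measure_mono_null (fun x hx => hx.1) hH)
      (fun x hx => hx.2)
  have hsub : E ⊆ (⋃ n, A n) ∪ {x | ¬ ((s:ℝ) : EReal) < lowerLocalDim μ x} := by
    intro x hx
    by_cases hl : ((s:ℝ) : EReal) < lowerLocalDim μ x
    · left
      have hev := eventually_lt_of_lt_liminf hl
      rw [Filter.Eventually, mem_nhdsGT_iff_exists_Ioo_subset] at hev
      obtain ⟨u, hu, hsubu⟩ := hev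
      have hu0 : (0:ℝ) < min u 1 := lt_min hu one_pos
      obtain ⟨n, hn⟩ := exists_nat_one_div_lt hu0
      refine mem_iUnion.2 ⟨n, hx, fun r hr0 hr => ?_⟩
      have hru : r < u := (hr.trans hn).trans_le (min_le_left _ _)
      have hr1 : r < 1 := (hr.trans hn).trans_le (min_le_right _ _)
      have h1 : ((s:ℝ) : EReal) < ((Real.log (μ (ball x r)).toReal / Real.log r : ℝ) : EReal) :=
        hsubu ⟨hr0, hru⟩
      rw [EReal.coe_lt_coe_iff] at h1
      have hlog : Real.log r < 0 := Real.log_neg hr0 hr1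
      rw [lt_div_iff_of_neg hlog, ← Real.log_rpow hr0] at h1
      rw [← ENNReal.ofReal_toReal (measure_ne_top μ (ball x r))]
      apply ENNReal.ofReal_le_ofReal
      rcases (ENNReal.toReal_nonneg (a := μ (ball x r))).eq_or_lt with h0 | h0
      · rw [← h0]; positivity
      · exact ((Real.log_lt_log_iff h0 (by positivity)).1 h1).le
    · right; exact hl
  have : μ E = 0 := measure_mono_null hsub
    (measure_union_null (measure_iUnion_null hA) hae)
  rw [hE] at this
  exact one_ne_zero this

end Local

/-- For a nonempty Borel set `E ⊆ ℝ^d`, the Hausdorff dimension of `E`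
equals the supremum of the lower Hausdorff dimensions of Borel probability measures `μ`
with `μ E = 1`. -/
theorem stmt1 (d : ℕ) (hd : 0 < d) (E : Set (EuclideanSpace ℝ (Fin d)))
    (hne : E.Nonempty) (hE : MeasurableSet E) :
    (dimH E : EReal) =
      ⨆ (μ : Measure (EuclideanSpace ℝ (Fin d))) (_ : IsProbabilityMeasure μ) (_ : μ E = 1),
        lowerHausdorffDim μ := by
  apply le_antisymm
  · apply le_of_forall_lt
    intro b hb
    rcases lt_or_ge b 0 with hb0 | hb0
    · obtain ⟨x, hx⟩ := hne
      refine lt_of_lt_of_le (hb0.trans_le (dirac_dim (Measure.dirac x))) ?_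
      exact le_iSup₂_of_le (Measure.dirac x) inferInstance
        (le_iSup_of_le (Measure.dirac_apply_of_mem hx) le_rfl)
    · obtain ⟨s', hs1, hs2⟩ := EReal.lt_iff_exists_real_btwn.1 hb
      obtain ⟨s, hs3, hs4⟩ := EReal.lt_iff_exists_real_btwn.1 hs2
      obtain ⟨t, ht1, ht2⟩ := EReal.lt_iff_exists_real_btwn.1 hs4
      have h0 : (0:ℝ) < s' := by exact_mod_cast hb0.trans_lt hs1
      have h1 : s' < s := by exact_mod_cast hs3
      have h2 : s < t := by exact_mod_cast ht1
      have ht0 : 0 ≤ t := by linarith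
      lift t to NNReal using ht0
      have hdim : (t : ENNReal) < dimH E := by
        rw [← EReal.coe_ennreal_lt_coe_ennreal_iff]
        exact ht2
      obtain ⟨μ, hμ, hμE, hle⟩ := exists_large_dim hE (by linarith) h1 h2 hdim
      refine lt_of_lt_of_le (hs1.trans_le hle) ?_
      exact le_iSup₂_of_le μ hμ (le_iSup_of_le hμE le_rfl)
  · refine iSup₂_le fun μ hμ => iSup_le fun hμE => ?_
    exact lowerHausdorffDim_le μ hμE
end
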